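/- arXiv:1006.4850 — 2 statements merged into one kernel-verified Lean document; each statement's English description precedes it below -/
import Mathlib

section
/- Let Γ be a connected locally finite graph with vertex set V and graph distance d, and let μ be a probability measure on V whose weight function M is totally defined. Then the mean-set E(μ) = {v ∈ V : M(v) ≤ M(u) for all u ∈ V} is nonempty and finite. -/
/-!
Pick a vertex `u₀` of positive mass. Each term of `M(v)` bounds it from below, so
`d(v,u₀)² μ(u₀) ≤ M(v)` and the sublevel set `{v | M(v) ≤ M(u₀)}` lies in a ball around `u₀`.
Balls in a connected locally finite graph are finite (`finite_dist_le`), hence so is the sublevel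
set. It contains `u₀`; a minimizer of `M` on it minimizes `M` globally, and every global minimizer
lies in it.
-/

open scoped ENNReal

/-- The weight function of a probability measure `μ` on the vertices of a graph `G`:
`M(v) = Σ_u d(v,u)² μ(u)`, computed in `ℝ≥0∞`. -/
noncomputable def graphWeight {V : Type*} (G : SimpleGraph V) (μ : V → ℝ≥0∞) (v : V) : ℝ≥0∞ :=
  ∑' u : V, (G.dist v u : ℝ≥0∞) ^ 2 * μ u

/-- The mean-set of a probability measure `μ` on the vertices of a graph `G`:
the set of vertices minimizing the weight function. -/
def graphMeanSet {V : Type*} (G : SimpleGraph V) (μ : V → ℝ≥0∞) : Set V :=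
  {v : V | ∀ u : V, graphWeight G μ v ≤ graphWeight G μ u}

/-- Balls in a connected locally finite graph are finite: a vertex at distance at most `n + 1`
from `u₀` is `u₀` or has a neighbor at distance at most `n`. -/
lemma finite_dist_le {V : Type*} (G : SimpleGraph V) (hconn : G.Connected)
    (hlf : G.LocallyFinite) (u₀ : V) (n : ℕ) : {v : V | G.dist v u₀ ≤ n}.Finite := by
  induction n with
  | zero =>
    refine (Set.finite_singleton u₀).subset fun v hv => ?_
    exact hconn.dist_eq_zero_iff.1 (Nat.le_zero.1 hv)
  | succ n ih =>
    have hnbr : (⋃ w ∈ {v : V | G.dist v u₀ ≤ n}, G.neighborSet w).Finite :=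
      ih.biUnion fun w _ => haveI := hlf w; Set.toFinite _
    refine ((Set.finite_singleton u₀).union hnbr).subset fun v hv => ?_
    obtain ⟨p, hp⟩ := hconn.exists_walk_length_eq_dist v u₀
    cases p with
    | nil => exact Or.inl rfl
    | @cons _ w _ hadj q =>
      refine Or.inr (Set.mem_biUnion (x := w) ?_ hadj.symm)
      have hq := SimpleGraph.dist_le q
      simp only [SimpleGraph.Walk.length_cons, Set.mem_ofPred_eq] at hp hv ⊢
      omega

/-- If the weight function of a probability measure on a connected locally finite graph is
totally defined, then the mean-set is nonempty and finite. -/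
theorem meanSet_nonempty_finite {V : Type*} (G : SimpleGraph V)
    (hconn : G.Connected) (hlf : G.LocallyFinite)
    (μ : V → ℝ≥0∞) (hμ : ∑' v : V, μ v = 1)
    (htot : ∀ v : V, graphWeight G μ v < ⊤) :
    (graphMeanSet G μ).Nonempty ∧ (graphMeanSet G μ).Finite := by
  obtain ⟨u₀, hu₀⟩ : ∃ u, μ u ≠ 0 := by
    by_contra! h
    simp [h] at hμ
  have hsub : {v : V | graphWeight G μ v ≤ graphWeight G μ u₀}.Finite := by
    have hC : graphWeight G μ u₀ / μ u₀ ≠ ⊤ := ENNReal.div_ne_top (htot u₀).ne hu₀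
    obtain ⟨n, hn⟩ := ENNReal.exists_nat_gt hC
    refine (finite_dist_le G hconn hlf u₀ n).subset fun v hv => ?_
    have hterm : (G.dist v u₀ : ℝ≥0∞) ^ 2 * μ u₀ ≤ graphWeight G μ u₀ :=
      (ENNReal.le_tsum (f := fun u => (G.dist v u : ℝ≥0∞) ^ 2 * μ u) u₀).trans hv
    have hμtop : μ u₀ ≠ ⊤ := ((ENNReal.le_tsum u₀).trans_lt (hμ ▸ ENNReal.one_lt_top)).ne
    have hsq : ((G.dist v u₀ ^ 2 : ℕ) : ℝ≥0∞) < n := by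
      push_cast
      exact ((ENNReal.le_div_iff_mul_le (Or.inl hu₀) (Or.inl hμtop)).2 hterm).trans_lt hn
    exact (Nat.le_self_pow two_ne_zero _).trans (Nat.cast_lt.1 hsq).le
  refine ⟨?_, hsub.subset fun v hv => hv u₀⟩
  obtain ⟨v, hv, hmin⟩ := Set.exists_min_image _ (graphWeight G μ) hsub
    ⟨u₀, le_refl (graphWeight G μ u₀)⟩
  refine ⟨v, fun u => ?_⟩
  by_cases hu : graphWeight G μ u ≤ graphWeight G μ u₀
  · exact hmin u hu
  · exact le_trans hv (not_le.1 hu).le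
end

section
/- Let T be a locally finite tree (a connected locally finite graph with no simple cycles) with vertex set V and graph distance d, and let μ be a probability measure on V whose weight function M is totally defined. If a vertex v ∈ V is a local minimum of M, i.e., M(v) ≤ M(u) for every vertex u adjacent to v, then v is a global minimum of M, i.e., v belongs to the mean-set E(μ). Consequently, the direct descent procedure, which repeatedly moves from the current vertex to an adjacent vertex of strictly smaller M-value until no adjacent vertex has smaller M-value, terminates at a point of the mean-set of μ. -/
/-!
Fix `w ≠ v`, put `n = d(v,w) ≥ 1`, and let `v₁` be the neighbour of `v` on the geodesic from `v`
to `w`. For every vertex `u`,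
`d(v,u)² + n d(v₁,u)² ≤ d(w,u)² + n d(v,u)²`,
a discrete form of the convexity of `d(·,u)²` along geodesics of a tree. Indeed, if `v₁` lies on a
geodesic from `v` to `u`, then `d(v₁,u) = d(v,u) - 1` and the triangle inequality
`|d(v,u) - n| ≤ d(w,u)` suffices; otherwise, every walk from `w` to `u` crosses the bridge `v v₁`,
so `d(w,u) ≥ n + d(v,u)` (`dist_add_dist_le_of_bridge`), and `d(v₁,u) ≤ d(v,u) + 1`.
Summing against `μ` gives `M(v) + n M(v₁) ≤ M(w) + n M(v)`; as `M(v) ≤ M(v₁)` and `M(v)` is finite,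
`M(v) ≤ M(w)` follows.
-/

open scoped ENNReal

lemma dist_add_dist_le_length {V : Type*} {G : SimpleGraph V} {a b x : V} (p : G.Walk a b)
    (hx : x ∈ p.support) : G.dist a x + G.dist x b ≤ p.length := by
  classical
  have h := congrArg SimpleGraph.Walk.length (p.take_spec hx)
  rw [SimpleGraph.Walk.length_append] at h
  have h1 := SimpleGraph.dist_le (p.takeUntil x hx)
  have h2 := SimpleGraph.dist_le (p.dropUntil x hx)
  omega

/-- If the edge `v v₁` of a tree points towards `w` but not towards `u`, then `v` lies between
`w` and `u`. Otherwise geodesics `v → u → w → v₁` would form a walk avoiding the bridge `v v₁`. -/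
lemma dist_add_dist_le_of_bridge {V : Type*} {T : SimpleGraph V}
    (hconn : T.Connected) (hacyc : T.IsAcyclic) {v v₁ w u : V} (hadj : T.Adj v v₁)
    (hw : T.dist v w = 1 + T.dist v₁ w) (hu : T.dist v u ≠ 1 + T.dist v₁ u) :
    T.dist v w + T.dist v u ≤ T.dist w u := by
  obtain ⟨p, hp⟩ := hconn.exists_walk_length_eq_dist v u
  obtain ⟨q, hq⟩ := hconn.exists_walk_length_eq_dist u w
  obtain ⟨r, hr⟩ := hconn.exists_walk_length_eq_dist w v₁
  have hd : T.dist v v₁ = 1 := SimpleGraph.dist_eq_one_iff_adj.mpr hadj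
  have hbr := SimpleGraph.isAcyclic_iff_forall_adj_isBridge.mp hacyc hadj
  have hmem := (SimpleGraph.isBridge_iff_forall_walk_mem_edges.mp hbr)
    ((p.append q).append r)
  simp only [SimpleGraph.Walk.edges_append, List.mem_append] at hmem
  rcases hmem with (h | h) | h
  · have h1 := dist_add_dist_le_length p (p.snd_mem_support_of_mem_edges h)
    have h2 := hconn.dist_triangle (u := v) (v := v₁) (w := u)
    omega
  · have h1 := dist_add_dist_le_length q (q.fst_mem_support_of_mem_edges h)
    rw [T.dist_comm (u := u) (v := v), T.dist_comm (u := u) (v := w)] at *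
    omega
  · have h1 := dist_add_dist_le_length r (r.fst_mem_support_of_mem_edges h)
    rw [T.dist_comm (u := w) (v := v), T.dist_comm (u := w) (v := v₁)] at *
    omega

/-- Discrete convexity of `d(·, u)²` along the geodesic from `v` through its neighbour `v₁`
to `w`. -/
lemma dist_sq_convex {V : Type*} {T : SimpleGraph V}
    (hconn : T.Connected) (hacyc : T.IsAcyclic) {v v₁ w : V} (hadj : T.Adj v v₁)
    (hw : T.dist v w = 1 + T.dist v₁ w) (u : V) :
    T.dist v u ^ 2 + T.dist v w * T.dist v₁ u ^ 2 ≤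
      T.dist w u ^ 2 + T.dist v w * T.dist v u ^ 2 := by
  have hn : 1 ≤ T.dist v w := by omega
  by_cases hu : T.dist v u = 1 + T.dist v₁ u
  · have h1 := hconn.dist_triangle (u := v) (v := w) (w := u)
    have h2 := hconn.dist_triangle (u := v) (v := u) (w := w)
    rw [T.dist_comm (u := u) (v := w)] at h2
    generalize T.dist v w = n at *
    generalize T.dist w u = c at *
    generalize T.dist v₁ u = b at *
    rw [hu] at h1 h2 ⊢
    zify at *
    have h3 : ((1 + b : ℤ) - n) ^ 2 ≤ c ^ 2 := by
      apply sq_le_sq'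
      · linarith
      · linarith
    nlinarith
  · have h1 := dist_add_dist_le_of_bridge hconn hacyc hadj hw hu
    have h2 := hconn.dist_triangle (u := v₁) (v := v) (w := u)
    rw [T.dist_comm (u := v₁) (v := v), SimpleGraph.dist_eq_one_iff_adj.mpr hadj] at h2
    generalize T.dist v w = n at *
    generalize T.dist w u = c at *
    generalize T.dist v₁ u = b at *
    generalize T.dist v u = a at *
    have h3 : (n + a) ^ 2 ≤ c ^ 2 := Nat.pow_le_pow_left h1 2
    have h4 : n * b ^ 2 ≤ n * (1 + a) ^ 2 := Nat.mul_le_mul_left n (Nat.pow_le_pow_left h2 2)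
    nlinarith

/-- On a locally finite tree, every local minimum of a totally defined weight function is a
global minimum, i.e. belongs to the mean-set.  Consequently the direct descent heuristic
terminates at a point of the mean-set. -/
theorem tree_localMin_mem_meanSet {V : Type*} (T : SimpleGraph V)
    (hconn : T.Connected) (hlf : T.LocallyFinite) (hacyc : T.IsAcyclic)
    (μ : V → ℝ≥0∞) (hμ : ∑' v : V, μ v = 1)
    (htot : ∀ v : V, graphWeight T μ v < ⊤)
    (v : V) (hloc : ∀ u : V, T.Adj v u → graphWeight T μ v ≤ graphWeight T μ u) :
    v ∈ graphMeanSet T μ := by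
  intro w
  obtain ⟨p, hp⟩ := hconn.exists_walk_length_eq_dist v w
  cases p with
  | nil => exact le_rfl
  | @cons _ v₁ _ hadj q =>
    have hw : T.dist v w = 1 + T.dist v₁ w := by
      rw [SimpleGraph.Walk.length_cons] at hp
      have h1 := SimpleGraph.dist_le q
      have h2 := hconn.dist_triangle (u := v) (v := v₁) (w := w)
      rw [SimpleGraph.dist_eq_one_iff_adj.mpr hadj] at h2
      omega
    have hsum : graphWeight T μ v + T.dist v w * graphWeight T μ v₁ ≤
        graphWeight T μ w + T.dist v w * graphWeight T μ v := by
      unfold graphWeight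
      rw [← ENNReal.tsum_mul_left, ← ENNReal.tsum_mul_left, ← ENNReal.tsum_add,
        ← ENNReal.tsum_add]
      refine ENNReal.tsum_le_tsum fun u => ?_
      rw [← mul_assoc, ← mul_assoc, ← add_mul, ← add_mul]
      refine mul_le_mul_left ?_ _
      exact_mod_cast dist_sq_convex hconn hacyc hadj hw u
    have hfin : (T.dist v w : ℝ≥0∞) * graphWeight T μ v ≠ ⊤ :=
      ENNReal.mul_ne_top (ENNReal.natCast_ne_top _) (htot v).ne
    refine (ENNReal.add_le_add_iff_right hfin).mp (le_trans ?_ hsum)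
    gcongr
    exact hloc v₁ hadj
end
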